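/- Let H be a complex separable Hilbert space, (e_j)_{j≥1} an orthonormal basis, (λ_j)_{j≥1} a nondecreasing sequence of positive reals with λ_j → ∞, and L(t) a 1-periodic family of symmetric operators from H¹(Γ) to H satisfying ‖L(t)ψ‖ ≤ C₀‖ψ‖₁ for all t and all ψ ∈ H¹(Γ) (Condition 1). Let U : ℝ → B(H) be a strongly continuous family of unitary operators with U(0) = I such that for every ψ ∈ H¹(Γ), t ↦ U(t)ψ has derivative i·L(t)U(t)ψ at each t, and assume there is a locally bounded B : ℝ → [0,∞) with ‖U(t)U(s)*ψ‖₁ ≤ B(t−s)‖ψ‖₁ for all s,t and all ψ ∈ H¹(Γ) (Condition 2). Assume the period operator V = U(1) has no eigenvector in H¹(Γ). Then for every τ > 0 and δ > 0 there exists ε₀ > 0 such that for every ε ∈ (0,ε₀), every φ₀ ∈ H with ‖φ₀‖ = 1, and every continuous φ^ε : [0,τ/ε] → H with φ^ε(0) = φ₀ such that for each t ∈ (0,τ/ε), φ^ε(t) ∈ H²(Γ) and φ^ε has derivative i·L(t)φ^ε(t) − ε·Γφ^ε(t) at t, one has ‖φ^ε(τ/ε)‖ < δ. -/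

import Mathlib

open scoped InnerProductSpace ENNReal
open MeasureTheory

/-- The (squared) homogeneous `H¹(Γ)` norm: `‖ψ‖₁² = Σ_j λ_j |⟨e_j, ψ⟩|² ∈ [0,∞]`. -/
noncomputable def H1normSq {H : Type*} [NormedAddCommGroup H] [InnerProductSpace ℂ H]
    (e : ℕ → H) (lam : ℕ → ℝ) (ψ : H) : ℝ≥0∞ :=
  ∑' j, ENNReal.ofReal (lam j * ‖⟪e j, ψ⟫_ℂ‖ ^ 2)

/-- `ψ ∈ H¹(Γ)`. -/
def MemH1 {H : Type*} [NormedAddCommGroup H] [InnerProductSpace ℂ H]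
    (e : ℕ → H) (lam : ℕ → ℝ) (ψ : H) : Prop :=
  H1normSq e lam ψ ≠ ⊤

/-- `ψ ∈ H²(Γ)`, i.e. `Σ_j λ_j² |⟨e_j, ψ⟩|² < ∞`. -/
def MemH2 {H : Type*} [NormedAddCommGroup H] [InnerProductSpace ℂ H]
    (e : ℕ → H) (lam : ℕ → ℝ) (ψ : H) : Prop :=
  (∑' j, ENNReal.ofReal ((lam j) ^ 2 * ‖⟪e j, ψ⟫_ℂ‖ ^ 2)) ≠ ⊤

/-- `Γψ = Σ_j λ_j ⟨e_j, ψ⟩ e_j` (defined as a `tsum`; meaningful for `ψ ∈ H²(Γ)`). -/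
noncomputable def Gam {H : Type*} [NormedAddCommGroup H] [InnerProductSpace ℂ H]
    [CompleteSpace H] (e : ℕ → H) (lam : ℕ → ℝ) (ψ : H) : H :=
  ∑' j, ((lam j : ℂ) * ⟪e j, ψ⟫_ℂ) • e j

/-!
The squared norm of a solution decreases at rate `2ε` times its `H¹(Γ)` energy, so the energy
integrated over `[0, τ/ε]` is at most `1/(2ε)` and the mean energy stays bounded as `ε → 0`. Since
`U` preserves `H¹(Γ)`, over one period the solution departs from the unitary evolution by at most
a constant times the square root of `ε` times its energy. If the norm stayed above `δ` for
arbitrarily small `ε`, then for a suitable phase `s ∈ (0, 1)` the vectors `a_k = U(s)* φ(s + k)`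
would form long approximate orbits of `V = U(1)` in the unit ball, away from `0` and with bounded
mean energy. Their mean density operators `n⁻¹ ∑ |a_k⟩⟨a_k|` are positive, asymptotically commute
with `V`, and cannot lose mass at high frequencies because `λ_j → ∞`. A weak limit `T` is therefore
nonzero, compact, commutes with `V` and has range in `H¹(Γ)`. An eigenspace of `T` for a nonzero
eigenvalue is finite-dimensional and `V`-invariant, which gives `V` an eigenvector in `H¹(Γ)`.
-/

section HilbertSpace

open Filter Topology InnerProductSpace ContinuousLinearMap

variable {ι 𝕜 E F : Type*} [RCLike 𝕜] [NormedAddCommGroup E] [InnerProductSpace 𝕜 E]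
  [NormedAddCommGroup F] [NormedSpace 𝕜 F]

theorem hasSum_norm_sq_inner (e : HilbertBasis ι 𝕜 E) (x : E) :
    HasSum (fun i => ‖⟪e i, x⟫_𝕜‖ ^ 2) (‖x‖ ^ 2) := by
  have h := RCLike.hasSum_re 𝕜 (e.hasSum_inner_mul_inner x x)
  simpa only [inner_mul_symm_re_eq_norm, norm_mul, norm_inner_symm x, ← pow_two,
    inner_self_eq_norm_sq] using h

theorem isCompactOperator_sum_rankOne {a : ι → E} (s : Finset ι) :
    IsCompactOperator (∑ i ∈ s, rankOne 𝕜 (a i) (a i) : E →L[𝕜] E) := by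
  suffices ∑ i ∈ s, rankOne 𝕜 (a i) (a i) ∈ compactOperator (RingHom.id 𝕜) E E from this
  refine Submodule.sum_mem _ fun i _ => ?_
  have h : IsCompactOperator (innerSL 𝕜 (a i)) :=
    (isCompactOperator_id (E := 𝕜)).comp_clm (innerSL 𝕜 (a i))
  exact h.continuous_comp (g := fun c : 𝕜 => c • a i) (by fun_prop)

theorem inner_sum_rankOne_apply [DecidableEq ι] (e : HilbertBasis ι 𝕜 E) (s : Finset ι) (i : ι)
    (x : E) :
    ⟪e i, (∑ j ∈ s, rankOne 𝕜 (e j) (e j) : E →L[𝕜] E) x⟫_𝕜 =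
      if i ∈ s then ⟪e i, x⟫_𝕜 else 0 := by
  simp [sum_apply, inner_sum, inner_smul_right, orthonormal_iff_ite.1 e.orthonormal]

theorem norm_sub_sum_rankOne_apply_sq (e : HilbertBasis ι 𝕜 E) (s : Finset ι) (x : E) :
    ‖x - (∑ j ∈ s, rankOne 𝕜 (e j) (e j) : E →L[𝕜] E) x‖ ^ 2 =
      ∑' i : { i // i ∉ s }, ‖⟪e i, x⟫_𝕜‖ ^ 2 := by
  classical
  rw [← (hasSum_norm_sq_inner e _).tsum_eq,
    ← tsum_subtype_eq_of_support_subset (s := { i | i ∉ s }) fun i hi his => hi ?_]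
  · refine tsum_congr fun i => ?_
    rw [inner_sub_right, inner_sum_rankOne_apply, if_neg i.2, sub_zero]
  · rw [inner_sub_right, inner_sum_rankOne_apply, if_pos his, sub_self, norm_zero, sq, zero_mul]

theorem isCompactOperator_of_norm_sq_inner_le [CompleteSpace E] (e : HilbertBasis ι 𝕜 E)
    (T : F →L[𝕜] E) {r : ι → ℝ} (hr : Summable r)
    (hT : ∀ i x, ‖⟪e i, T x⟫_𝕜‖ ^ 2 ≤ r i * ‖x‖ ^ 2) : IsCompactOperator T := by
  let P (s : Finset ι) : E →L[𝕜] E := ∑ i ∈ s, rankOne 𝕜 (e i) (e i)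
  have norm_sub_le (s : Finset ι) : ‖P s ∘L T - T‖ ≤ √(∑' i : { i // i ∉ s }, r i) := by
    refine opNorm_le_bound _ (Real.sqrt_nonneg _) fun x => ?_
    have hsq : ‖T x - P s (T x)‖ ^ 2 ≤ (∑' i : { i // i ∉ s }, r i) * ‖x‖ ^ 2 := by
      rw [norm_sub_sum_rankOne_apply_sq, ← tsum_mul_right]
      exact Summable.tsum_le_tsum (fun i => hT i x)
        ((hasSum_norm_sq_inner e (T x)).summable.subtype _) (hr.subtype _ |>.mul_right _)
    rw [_root_.sub_apply, comp_apply, norm_sub_rev, ← Real.sqrt_sq (norm_nonneg x),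
      ← Real.sqrt_mul' _ (sq_nonneg _)]
    exact Real.le_sqrt_of_sq_le hsq
  refine isCompactOperator_of_tendsto (l := atTop) (F := fun s => P s ∘L T) ?_
    (Eventually.of_forall fun s => (isCompactOperator_sum_rankOne s).comp_clm T)
  rw [tendsto_iff_norm_sub_tendsto_zero]
  refine squeeze_zero (fun _ => norm_nonneg _) norm_sub_le ?_
  simpa only [Real.sqrt_zero] using (tendsto_tsum_compl_atTop_zero r).sqrt

theorem exists_tendsto_inner_of_norm_le [CompleteSpace E] {α : Type*} (𝒰 : Ultrafilter α)
    {A : α → E →L[𝕜] E} {c : ℝ} (hA : ∀ n, ‖A n‖ ≤ c) :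
    ∃ T : E →L[𝕜] E, ∀ x y, Tendsto (fun n => ⟪x, A n y⟫_𝕜) 𝒰 (𝓝 ⟪x, T y⟫_𝕜) := by
  have hbound (n : α) (x y : E) : ‖⟪A n x, y⟫_𝕜‖ ≤ c * ‖x‖ * ‖y‖ :=
    (norm_inner_le_norm _ _).trans (by gcongr; exact (A n).le_of_opNorm_le (hA n) x)
  have hlim (x y : E) : ∃ l, Tendsto (fun n => ⟪A n x, y⟫_𝕜) 𝒰 (𝓝 l) := by
    obtain ⟨l, -, hl⟩ := (isCompact_closedBall (0 : 𝕜) (c * ‖x‖ * ‖y‖)).ultrafilter_le_nhds'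
      (𝒰.map fun n => ⟪A n x, y⟫_𝕜) (mem_map.2 (univ_mem' fun n => by simpa using hbound n x y))
    exact ⟨l, hl⟩
  choose b hb using hlim
  let form : E →ₗ⋆[𝕜] E →ₗ[𝕜] 𝕜 := LinearMap.mk₂'ₛₗ (starRingEnd 𝕜) (RingHom.id 𝕜) b
    (fun x y z => tendsto_nhds_unique (hb _ _)
      (by simpa only [map_add, inner_add_left] using (hb x z).add (hb y z)))
    (fun k x y => tendsto_nhds_unique (hb _ _)
      (by simpa only [map_smul, inner_smul_left, smul_eq_mul] using (hb x y).const_mul _))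
    (fun x y z => tendsto_nhds_unique (hb _ _)
      (by simpa only [inner_add_right] using (hb x y).add (hb x z)))
    (fun k x y => tendsto_nhds_unique (hb _ _)
      (by simpa only [inner_smul_right, smul_eq_mul, RingHom.id_apply] using (hb x y).const_mul _))
  let T := continuousLinearMapOfBilin (form.mkContinuous₂ c fun x y =>
    le_of_tendsto (hb x y).norm (Eventually.of_forall fun n => hbound n x y))
  have hT (x y : E) : ⟪T x, y⟫_𝕜 = b x y := continuousLinearMapOfBilin_apply _ x y
  refine ⟨T, fun x y => ?_⟩
  have h := (RCLike.continuous_conj.tendsto _).comp (hb y x)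
  rw [← hT, inner_conj_symm] at h
  exact h.congr fun n => inner_conj_symm x (A n y)

theorem isPositive_of_tendsto_inner {α : Type*} {l : Filter α} [l.NeBot]
    {A : α → E →L[𝕜] E} {T : E →L[𝕜] E} (hA : ∀ n, (A n).IsPositive)
    (hT : ∀ x y, Tendsto (fun n => ⟪x, A n y⟫_𝕜) l (𝓝 ⟪x, T y⟫_𝕜)) : T.IsPositive := by
  refine ⟨fun x y => ?_, fun x => ?_⟩
  · have h := (RCLike.continuous_conj.tendsto _).comp (hT y x)
    rw [inner_conj_symm] at h
    refine tendsto_nhds_unique h ((hT x y).congr fun n => ?_)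
    rw [Function.comp_apply, inner_conj_symm]
    exact ((hA n).isSymmetric x y).symm
  · have h := ((RCLike.continuous_re.tendsto _).comp (hT x x))
    rw [reApplyInnerSelf_apply, inner_re_symm]
    exact ge_of_tendsto h (Eventually.of_forall fun n => (hA n).re_inner_nonneg_right x)

theorem commute_of_tendsto_inner [CompleteSpace E] {α : Type*} {l : Filter α} [l.NeBot]
    {A : α → E →L[𝕜] E} {T V : E →L[𝕜] E}
    (hT : ∀ x y, Tendsto (fun n => ⟪x, A n y⟫_𝕜) l (𝓝 ⟪x, T y⟫_𝕜))
    (hV : Tendsto (fun n => V * A n - A n * V) l (𝓝 0)) : Commute V T := by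
  refine ContinuousLinearMap.ext fun y => ext_inner_left 𝕜 fun x => sub_eq_zero.1 ?_
  have inner_commutator (S : E →L[𝕜] E) :
      ⟪x, (V * S - S * V) y⟫_𝕜 = ⟪adjoint V x, S y⟫_𝕜 - ⟪x, S (V y)⟫_𝕜 := by
    simp only [_root_.sub_apply, mul_apply_eq_comp, inner_sub_right, adjoint_inner_left]
  have hzero := ((innerSL 𝕜 x ∘L ContinuousLinearMap.apply 𝕜 E y).continuous.tendsto 0).comp hV
  rw [map_zero] at hzero
  have hlim := (hT (adjoint V x) y).sub (hT x (V y))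
  simp only [← inner_commutator] at hlim
  simpa only [_root_.sub_apply, inner_sub_right] using tendsto_nhds_unique hlim hzero

variable {H : Type*} [NormedAddCommGroup H] [InnerProductSpace ℂ H] [CompleteSpace H]

theorem norm_sq_apply_le_of_isPositive {T : H →L[ℂ] H} (hT : T.IsPositive) (x : H) :
    ‖T x‖ ^ 2 ≤ ‖T‖ * (⟪x, T x⟫_ℂ).re := by
  obtain ⟨S, rfl⟩ := CStarAlgebra.nonneg_iff_eq_star_mul_self.1 (nonneg_iff_isPositive T |>.2 hT)
  have hS : ⟪x, (star S * S) x⟫_ℂ = ((‖S x‖ ^ 2 : ℝ) : ℂ) := by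
    rw [mul_apply_eq_comp, star_eq_adjoint, adjoint_inner_right, inner_self_eq_norm_sq_to_K]
    norm_cast
  rw [hS, Complex.ofReal_re, CStarRing.norm_star_mul_self, mul_apply_eq_comp, ← sq, ← mul_pow]
  gcongr
  simpa only [norm_star] using (star S).le_opNorm (S x)

theorem norm_inner_apply_sq_le_of_isPositive {T : H →L[ℂ] H} (hT : T.IsPositive) (x y : H) :
    ‖⟪x, T y⟫_ℂ‖ ^ 2 ≤ ‖T‖ * (⟪x, T x⟫_ℂ).re * ‖y‖ ^ 2 := by
  have hsymm : ⟪T x, y⟫_ℂ = ⟪x, T y⟫_ℂ := hT.isSymmetric x y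
  rw [← hsymm]
  calc ‖⟪T x, y⟫_ℂ‖ ^ 2 ≤ (‖T x‖ * ‖y‖) ^ 2 := by gcongr; exact norm_inner_le_norm _ _
    _ = ‖T x‖ ^ 2 * ‖y‖ ^ 2 := mul_pow _ _ _
    _ ≤ ‖T‖ * (⟪x, T x⟫_ℂ).re * ‖y‖ ^ 2 := by gcongr; exact norm_sq_apply_le_of_isPositive hT x

theorem exists_eigenvector_mem_range_of_commute {T V : H →L[ℂ] H}
    (hcompact : IsCompactOperator T) (hsymm : T.IsSymmetric) (hT : T ≠ 0) (hVT : Commute V T) :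
    ∃ x ≠ 0, (∃ μ : ℂ, V x = μ • x) ∧ x ∈ Set.range T := by
  obtain ⟨ν, hν, hν0⟩ : ∃ ν : ℂ, Module.End.HasEigenvalue (T : Module.End ℂ H) ν ∧ ν ≠ 0 := by
    by_contra! h
    exact hT ((eq_zero_of_forall_hasEigenvalue_eq_zero hcompact hsymm).1 h)
  let K := Module.End.eigenspace (T : Module.End ℂ H) ν
  have : FiniteDimensional ℂ K := finite_dimensional_eigenspace hcompact ν hν0
  have : Nontrivial K := Submodule.nontrivial_iff_ne_bot.2 hν
  have hVK : ∀ x ∈ K, (V : Module.End ℂ H) x ∈ K :=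
    Module.End.mapsTo_genEigenspace_of_comm
      (congrArg ContinuousLinearMap.toLinearMap hVT.symm.eq) ν 1
  obtain ⟨μ, hμ⟩ := Module.End.exists_eigenvalue ((V : Module.End ℂ H).restrict hVK)
  obtain ⟨x, hx⟩ := hμ.exists_hasEigenvector
  refine ⟨x, fun h => hx.2 (Subtype.ext h), ⟨μ, congrArg Subtype.val hx.apply_eq_smul⟩, ν⁻¹ • x, ?_⟩
  have hTx : T x = ν • (x : H) := Module.End.mem_eigenspace_iff.1 x.2
  rw [map_smul, hTx, inv_smul_smul₀ hν0]

end HilbertSpace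

section Energy

variable {H : Type*} [NormedAddCommGroup H] [InnerProductSpace ℂ H] {lam : ℕ → ℝ}

/-- The squared `H¹(Γ)` norm as a real number. For `0 ≤ lam` it agrees with `H1normSq` on `H¹(Γ)`;
elsewhere the series diverges and the value is the junk value `0`. -/
noncomputable def H1energy (e : ℕ → H) (lam : ℕ → ℝ) (x : H) : ℝ :=
  ∑' j, lam j * ‖⟪e j, x⟫_ℂ‖ ^ 2

theorem tsum_ofReal_ne_top_iff_summable {α : Type*} {f : α → ℝ} (hf : ∀ a, 0 ≤ f a) :
    ∑' a, ENNReal.ofReal (f a) ≠ ⊤ ↔ Summable f := by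
  refine ⟨fun h => ?_, fun h => h.tsum_ofReal_ne_top⟩
  simpa only [ENNReal.toReal_ofReal (hf _)] using ENNReal.summable_toReal h

theorem memH1_iff_summable (hlam : ∀ j, 0 ≤ lam j) {e : ℕ → H} {x : H} :
    MemH1 e lam x ↔ Summable fun j => lam j * ‖⟪e j, x⟫_ℂ‖ ^ 2 :=
  tsum_ofReal_ne_top_iff_summable fun j => mul_nonneg (hlam j) (sq_nonneg _)

theorem memH2_iff_summable {e : ℕ → H} {x : H} :
    MemH2 e lam x ↔ Summable fun j => lam j ^ 2 * ‖⟪e j, x⟫_ℂ‖ ^ 2 :=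
  tsum_ofReal_ne_top_iff_summable fun _ => by positivity

theorem hasSum_H1energy (hlam : ∀ j, 0 ≤ lam j) {e : ℕ → H} {x : H} (hx : MemH1 e lam x) :
    HasSum (fun j => lam j * ‖⟪e j, x⟫_ℂ‖ ^ 2) (H1energy e lam x) :=
  ((memH1_iff_summable hlam).1 hx).hasSum

theorem H1energy_nonneg (hlam : ∀ j, 0 ≤ lam j) (e : ℕ → H) (x : H) : 0 ≤ H1energy e lam x :=
  tsum_nonneg fun j => mul_nonneg (hlam j) (sq_nonneg _)

theorem H1normSq_eq_ofReal_H1energy (hlam : ∀ j, 0 ≤ lam j) {e : ℕ → H} {x : H}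
    (hx : MemH1 e lam x) : H1normSq e lam x = ENNReal.ofReal (H1energy e lam x) :=
  (ENNReal.ofReal_tsum_of_nonneg (fun j => mul_nonneg (hlam j) (sq_nonneg _))
    ((memH1_iff_summable hlam).1 hx)).symm

theorem memH1_of_H1normSq_le {e : ℕ → H} {x y : H} {c : ℝ} (hx : MemH1 e lam x)
    (h : H1normSq e lam y ≤ ENNReal.ofReal c * H1normSq e lam x) : MemH1 e lam y :=
  ne_top_of_le_ne_top (ENNReal.mul_ne_top ENNReal.ofReal_ne_top hx) h

theorem H1energy_le_of_H1normSq_le (hlam : ∀ j, 0 ≤ lam j) {e : ℕ → H} {x y : H} {c : ℝ}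
    (hc : 0 ≤ c) (hx : MemH1 e lam x)
    (h : H1normSq e lam y ≤ ENNReal.ofReal c * H1normSq e lam x) :
    H1energy e lam y ≤ c * H1energy e lam x := by
  have hy := memH1_of_H1normSq_le hx h
  rwa [H1normSq_eq_ofReal_H1energy hlam hx, H1normSq_eq_ofReal_H1energy hlam hy,
    ← ENNReal.ofReal_mul hc,
    ENNReal.ofReal_le_ofReal_iff (mul_nonneg hc (H1energy_nonneg hlam e x))] at h

theorem MemH1.sub (hlam : ∀ j, 0 ≤ lam j) {e : ℕ → H} {x y : H} (hx : MemH1 e lam x)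
    (hy : MemH1 e lam y) : MemH1 e lam (x - y) := by
  rw [memH1_iff_summable hlam] at *
  refine ((hx.add hy).mul_left 2).of_nonneg_of_le (fun j => mul_nonneg (hlam j) (sq_nonneg _))
    fun j => ?_
  have hsq : ‖⟪e j, x - y⟫_ℂ‖ ^ 2 ≤ 2 * (‖⟪e j, x⟫_ℂ‖ ^ 2 + ‖⟪e j, y⟫_ℂ‖ ^ 2) := by
    rw [inner_sub_right]
    exact (pow_le_pow_left₀ (norm_nonneg _) (norm_sub_le _ _) 2).trans add_sq_le
  calc lam j * ‖⟪e j, x - y⟫_ℂ‖ ^ 2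
      ≤ lam j * (2 * (‖⟪e j, x⟫_ℂ‖ ^ 2 + ‖⟪e j, y⟫_ℂ‖ ^ 2)) :=
        mul_le_mul_of_nonneg_left hsq (hlam j)
    _ = 2 * (lam j * ‖⟪e j, x⟫_ℂ‖ ^ 2 + lam j * ‖⟪e j, y⟫_ℂ‖ ^ 2) := by ring

theorem memH1_of_orthonormal (hlam : ∀ j, 0 ≤ lam j) {e : ℕ → H} (he : Orthonormal ℂ e) (i : ℕ) :
    MemH1 e lam (e i) := by
  rw [memH1_iff_summable hlam]
  refine summable_of_ne_finset_zero (s := {i}) fun j hj => ?_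
  simp [he.2 (Finset.notMem_singleton.1 hj)]

theorem MemH2.memH1 (hlam : ∀ j, 0 ≤ lam j) {e : HilbertBasis ℕ ℂ H} {x : H}
    (hx : MemH2 e lam x) : MemH1 e lam x := by
  rw [memH1_iff_summable hlam]
  refine ((memH2_iff_summable.1 hx).add (hasSum_norm_sq_inner e x).summable).of_nonneg_of_le
    (fun j => mul_nonneg (hlam j) (sq_nonneg _)) fun j => ?_
  calc lam j * ‖⟪e j, x⟫_ℂ‖ ^ 2 ≤ (lam j ^ 2 + 1) * ‖⟪e j, x⟫_ℂ‖ ^ 2 := by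
        gcongr
        nlinarith [sq_nonneg (lam j - 1), hlam j]
    _ = lam j ^ 2 * ‖⟪e j, x⟫_ℂ‖ ^ 2 + ‖⟪e j, x⟫_ℂ‖ ^ 2 := by ring

theorem mul_norm_sq_le_H1energy_add (hlam : ∀ j, 0 ≤ lam j) {e : HilbertBasis ℕ ℂ H} {x : H}
    (hx : MemH1 e lam x) {s : Finset ℕ} {K : ℝ} (hK : ∀ j ∉ s, K ≤ lam j) :
    K * ‖x‖ ^ 2 ≤ H1energy e lam x + K * ∑ j ∈ s, ‖⟪e j, x⟫_ℂ‖ ^ 2 := by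
  have h : HasSum (fun j => (lam j - K) * ‖⟪e j, x⟫_ℂ‖ ^ 2)
      (H1energy e lam x - K * ‖x‖ ^ 2) := by
    simpa only [sub_mul] using
      (hasSum_H1energy hlam hx).sub ((hasSum_norm_sq_inner e x).mul_left K)
  have hpartial := sum_le_hasSum s
    (fun j hj => mul_nonneg (sub_nonneg.2 (hK j hj)) (sq_nonneg _)) h
  have hlower : -(K * ∑ j ∈ s, ‖⟪e j, x⟫_ℂ‖ ^ 2) ≤ ∑ j ∈ s, (lam j - K) * ‖⟪e j, x⟫_ℂ‖ ^ 2 := by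
    rw [Finset.mul_sum, ← Finset.sum_neg_distrib]
    refine Finset.sum_le_sum fun j _ => ?_
    linarith [mul_nonneg (hlam j) (sq_nonneg ‖⟪e j, x⟫_ℂ‖)]
  linarith

variable [CompleteSpace H]

theorem hasSum_inner_Gam {e : HilbertBasis ℕ ℂ H} {x : H} (hx : MemH2 e lam x) (y : H) :
    HasSum (fun j => (lam j : ℂ) * (⟪y, e j⟫_ℂ * ⟪e j, x⟫_ℂ)) ⟪y, Gam e lam x⟫_ℂ := by
  have hcoeff : Memℓp (fun j => (lam j : ℂ) * ⟪e j, x⟫_ℂ) 2 := by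
    refine memℓp_gen ((memH2_iff_summable.1 hx).congr fun j => ?_)
    simp [mul_pow]
  have hGam : HasSum (fun j => ((lam j : ℂ) * ⟪e j, x⟫_ℂ) • e j) (Gam e lam x) :=
    (e.hasSum_repr_symm ⟨_, hcoeff⟩).summable.hasSum
  refine (hGam.mapL (innerSL ℂ y)).congr_fun fun j => ?_
  rw [innerSL_apply_apply, inner_smul_right]
  ring

theorem re_inner_Gam_self {e : HilbertBasis ℕ ℂ H} {x : H} (hx : MemH2 e lam x) :
    (⟪x, Gam e lam x⟫_ℂ).re = H1energy e lam x := by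
  rw [← (Complex.hasSum_re (hasSum_inner_Gam hx x)).tsum_eq]
  refine tsum_congr fun j => ?_
  rw [Complex.re_ofReal_mul, ← RCLike.re_eq_complex_re, inner_mul_symm_re_eq_norm, norm_mul,
    norm_inner_symm x, ← sq]

theorem re_inner_Gam_le (hlam : ∀ j, 0 ≤ lam j) {e : HilbertBasis ℕ ℂ H} {x y : H}
    (hx : MemH2 e lam x) (hy : MemH1 e lam y) :
    (⟪y, Gam e lam x⟫_ℂ).re ≤ H1energy e lam x + H1energy e lam y / 4 := by
  refine hasSum_le (fun j => ?_) (Complex.hasSum_re (hasSum_inner_Gam hx y))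
    ((hasSum_H1energy hlam (hx.memH1 hlam)).add ((hasSum_H1energy hlam hy).div_const 4))
  calc ((lam j : ℂ) * (⟪y, e j⟫_ℂ * ⟪e j, x⟫_ℂ)).re
      ≤ lam j * (‖⟪e j, y⟫_ℂ‖ * ‖⟪e j, x⟫_ℂ‖) := by
        rw [Complex.re_ofReal_mul, norm_inner_symm (e j) y, ← norm_mul]
        exact mul_le_mul_of_nonneg_left (Complex.re_le_norm _) (hlam j)
    _ ≤ lam j * (‖⟪e j, x⟫_ℂ‖ ^ 2 + ‖⟪e j, y⟫_ℂ‖ ^ 2 / 4) := by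
        refine mul_le_mul_of_nonneg_left ?_ (hlam j)
        linarith [sq_nonneg (‖⟪e j, x⟫_ℂ‖ - ‖⟪e j, y⟫_ℂ‖ / 2)]
    _ = lam j * ‖⟪e j, x⟫_ℂ‖ ^ 2 + lam j * ‖⟪e j, y⟫_ℂ‖ ^ 2 / 4 := by ring

end Energy

section MeanRankOne

open InnerProductSpace ContinuousLinearMap
open scoped ComplexOrder

variable {𝕜 E : Type*} [RCLike 𝕜] [NormedAddCommGroup E] [InnerProductSpace 𝕜 E]

variable (𝕜) in
/-- The mean density operator `n⁻¹ ∑_{k < n} |a k⟩⟨a k|` of the first `n` terms of a sequence of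
vectors. -/
noncomputable def meanRankOne (n : ℕ) (a : ℕ → E) : E →L[𝕜] E :=
  (n : 𝕜)⁻¹ • ∑ k ∈ Finset.range n, rankOne 𝕜 (a k) (a k)

theorem isPositive_meanRankOne (n : ℕ) (a : ℕ → E) : (meanRankOne 𝕜 n a).IsPositive := by
  refine IsPositive.smul_of_nonneg (isPositive_sum _ fun k _ => isPositive_rankOne_self (a k)) ?_
  exact inv_nonneg.2 n.cast_nonneg

theorem norm_rankOne_self_le_one {x : E} (hx : ‖x‖ ≤ 1) : ‖rankOne 𝕜 x x‖ ≤ 1 := by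
  rw [norm_rankOne]
  exact mul_le_one₀ hx (norm_nonneg x) hx

theorem norm_meanRankOne_le_one {n : ℕ} {a : ℕ → E} (ha : ∀ k < n, ‖a k‖ ≤ 1) :
    ‖meanRankOne 𝕜 n a‖ ≤ 1 := by
  have hsum : ‖∑ k ∈ Finset.range n, rankOne 𝕜 (a k) (a k)‖ ≤ n :=
    (norm_sum_le_of_le _ fun k hk =>
      norm_rankOne_self_le_one (ha k (Finset.mem_range.1 hk))).trans_eq (by simp)
  rw [meanRankOne, norm_smul, norm_inv, RCLike.norm_natCast]
  exact inv_mul_le_one_of_le₀ hsum n.cast_nonneg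

theorem re_inner_meanRankOne_apply (n : ℕ) (a : ℕ → E) (x : E) :
    RCLike.re ⟪x, meanRankOne 𝕜 n a x⟫_𝕜 =
      (n : ℝ)⁻¹ * ∑ k ∈ Finset.range n, ‖⟪x, a k⟫_𝕜‖ ^ 2 := by
  have hterm (k : ℕ) : RCLike.re ⟪x, rankOne 𝕜 (a k) (a k) x⟫_𝕜 = ‖⟪x, a k⟫_𝕜‖ ^ 2 := by
    rw [rankOne_apply, inner_smul_right, mul_comm, inner_mul_symm_re_eq_norm, norm_mul,
      norm_inner_symm (a k), sq]
  have hn : (n : 𝕜)⁻¹ = ((n : ℝ)⁻¹ : ℝ) := by push_cast; rfl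
  simp only [meanRankOne, smul_apply, sum_apply, inner_smul_right, inner_sum, hn,
    RCLike.re_ofReal_mul, map_sum, hterm]

theorem norm_mul_rankOne_sub_rankOne_mul_le [CompleteSpace E] {V : E →L[𝕜] E}
    (hV : V ∈ unitary (E →L[𝕜] E)) {a b : E} (ha : ‖a‖ ≤ 1) (hb : ‖b‖ ≤ 1) :
    ‖V * rankOne 𝕜 a a - rankOne 𝕜 b b * V‖ ≤ 2 * ‖b - V a‖ := by
  have hVa : adjoint V (V a) = a := congrArg (· a) (Unitary.star_mul_self_of_mem hV)
  have hsplit : V * rankOne 𝕜 a a - rankOne 𝕜 b b * V =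
      -(rankOne 𝕜 (b - V a) a + rankOne 𝕜 b (adjoint V (b - V a))) := by
    rw [mul_def, mul_def, comp_rankOne, rankOne_comp]
    simp only [map_sub, hVa, _root_.sub_apply]
    abel
  have hadjoint : ‖adjoint V (b - V a)‖ = ‖b - V a‖ :=
    norm_map_of_mem_unitary (Unitary.star_mem hV) _
  calc ‖V * rankOne 𝕜 a a - rankOne 𝕜 b b * V‖
      ≤ ‖b - V a‖ * ‖a‖ + ‖b‖ * ‖b - V a‖ := by
        rw [hsplit, norm_neg]
        refine norm_add_le_of_le (norm_rankOne _ _).le ?_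
        rw [norm_rankOne, hadjoint]
    _ ≤ ‖b - V a‖ * 1 + 1 * ‖b - V a‖ := by gcongr
    _ = 2 * ‖b - V a‖ := by ring

theorem norm_commutator_meanRankOne_le [CompleteSpace E] {V : E →L[𝕜] E}
    (hV : V ∈ unitary (E →L[𝕜] E)) {n : ℕ} {a : ℕ → E} (ha : ∀ k ≤ n, ‖a k‖ ≤ 1) :
    ‖V * meanRankOne 𝕜 n a - meanRankOne 𝕜 n a * V‖ ≤
      (n : ℝ)⁻¹ * (2 + 2 * ∑ k ∈ Finset.range n, ‖a (k + 1) - V (a k)‖) := by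
  let P (k : ℕ) : E →L[𝕜] E := rankOne 𝕜 (a k) (a k)
  have htelescope : V * meanRankOne 𝕜 n a - meanRankOne 𝕜 n a * V =
      (n : 𝕜)⁻¹ • ((P n - P 0) * V + ∑ k ∈ Finset.range n, (V * P k - P (k + 1) * V)) := by
    rw [meanRankOne, mul_smul_comm, smul_mul_assoc, ← smul_sub, ← Finset.sum_range_sub P n,
      Finset.sum_mul, Finset.sum_mul, Finset.mul_sum, ← Finset.sum_sub_distrib,
      ← Finset.sum_add_distrib]
    congr 1
    refine Finset.sum_congr rfl fun k _ => ?_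
    rw [sub_mul]
    abel
  have hends : ‖(P n - P 0) * V‖ ≤ 2 := by
    rw [CStarRing.norm_mul_mem_unitary _ hV, ← one_add_one_eq_two]
    exact norm_sub_le_of_le (norm_rankOne_self_le_one (ha n le_rfl))
      (norm_rankOne_self_le_one (ha 0 n.zero_le))
  have hsteps : ‖∑ k ∈ Finset.range n, (V * P k - P (k + 1) * V)‖ ≤
      2 * ∑ k ∈ Finset.range n, ‖a (k + 1) - V (a k)‖ := by
    rw [Finset.mul_sum]
    refine norm_sum_le_of_le _ fun k hk => ?_
    have hk : k < n := Finset.mem_range.1 hk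
    exact norm_mul_rankOne_sub_rankOne_mul_le hV (ha k hk.le) (ha (k + 1) hk)
  rw [htelescope, norm_smul, norm_inv, RCLike.norm_natCast]
  gcongr
  exact norm_add_le_of_le hends hsteps

end MeanRankOne

section Eigenvector

open Filter Topology ContinuousLinearMap

variable {H : Type*} [NormedAddCommGroup H] [InnerProductSpace ℂ H] {e : HilbertBasis ℕ ℂ H}
  {lam : ℕ → ℝ}

theorem summable_of_summable_mul_of_tendsto_atTop {r : ℕ → ℝ} (hr : ∀ j, 0 ≤ r j)
    (htop : Tendsto lam atTop atTop) (h : Summable fun j => lam j * r j) : Summable r := by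
  refine h.of_norm_bounded_eventually_nat ((htop.eventually_ge_atTop 1).mono fun j hj => ?_)
  rw [Real.norm_of_nonneg (hr j)]
  exact le_mul_of_one_le_left (hr j) hj

variable [CompleteSpace H]

theorem memH1_apply_of_isPositive (hlam : ∀ j, 0 ≤ lam j) {T : H →L[ℂ] H} (hT : T.IsPositive)
    (h : Summable fun j => lam j * (⟪e j, T (e j)⟫_ℂ).re) (x : H) : MemH1 e lam (T x) := by
  rw [memH1_iff_summable hlam]
  refine (h.mul_left (‖T‖ * ‖x‖ ^ 2)).of_nonneg_of_le
    (fun j => mul_nonneg (hlam j) (sq_nonneg _)) fun j => ?_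
  calc lam j * ‖⟪e j, T x⟫_ℂ‖ ^ 2
      ≤ lam j * (‖T‖ * (⟪e j, T (e j)⟫_ℂ).re * ‖x‖ ^ 2) :=
        mul_le_mul_of_nonneg_left (norm_inner_apply_sq_le_of_isPositive hT _ _) (hlam j)
    _ = ‖T‖ * ‖x‖ ^ 2 * (lam j * (⟪e j, T (e j)⟫_ℂ).re) := by ring

theorem isCompactOperator_of_isPositive (htop : Tendsto lam atTop atTop) {T : H →L[ℂ] H}
    (hT : T.IsPositive) (h : Summable fun j => lam j * (⟪e j, T (e j)⟫_ℂ).re) :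
    IsCompactOperator T :=
  isCompactOperator_of_norm_sq_inner_le e T
    ((summable_of_summable_mul_of_tendsto_atTop (fun j => hT.re_inner_nonneg_right (e j))
      htop h).mul_left ‖T‖) fun _ => norm_inner_apply_sq_le_of_isPositive hT _

theorem exists_eigenvector_memH1_of_commutator_tendsto_zero (hlam : ∀ j, 0 ≤ lam j)
    (htop : Tendsto lam atTop atTop) {α : Type*} {l : Filter α} [l.NeBot] {V : H →L[ℂ] H}
    {D : α → H →L[ℂ] H} (hpos : ∀ n, (D n).IsPositive) {c C κ : ℝ} (hnorm : ∀ n, ‖D n‖ ≤ c)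
    (hcomm : Tendsto (fun n => V * D n - D n * V) l (𝓝 0))
    (henergy : ∀ n (F : Finset ℕ), ∑ j ∈ F, lam j * (⟪e j, D n (e j)⟫_ℂ).re ≤ C)
    {s : Finset ℕ} (hκ : 0 < κ) (hmass : ∀ n, κ ≤ ∑ j ∈ s, (⟪e j, D n (e j)⟫_ℂ).re) :
    ∃ x ≠ 0, (∃ μ : ℂ, V x = μ • x) ∧ MemH1 e lam x := by
  obtain ⟨T, hT⟩ := exists_tendsto_inner_of_norm_le (Ultrafilter.of l) hnorm
  have hdiag (j : ℕ) : Tendsto (fun n => (⟪e j, D n (e j)⟫_ℂ).re) (Ultrafilter.of l)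
      (𝓝 (⟪e j, T (e j)⟫_ℂ).re) := (Complex.continuous_re.tendsto _).comp (hT (e j) (e j))
  have hTpos : T.IsPositive := isPositive_of_tendsto_inner hpos hT
  have hTne : T ≠ 0 := by
    rintro rfl
    have := ge_of_tendsto' (tendsto_finsetSum s fun j _ => hdiag j) hmass
    simp only [zero_apply, inner_zero_right, Complex.zero_re, Finset.sum_const_zero] at this
    exact hκ.not_ge this
  have hTenergy : Summable fun j => lam j * (⟪e j, T (e j)⟫_ℂ).re :=
    summable_of_sum_le (fun j => mul_nonneg (hlam j) (hTpos.re_inner_nonneg_right (e j))) fun F =>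
      le_of_tendsto' (tendsto_finsetSum F fun j _ => (hdiag j).const_mul (lam j))
        fun n => henergy n F
  obtain ⟨x, hx, hVx, y, rfl⟩ := exists_eigenvector_mem_range_of_commute
    (isCompactOperator_of_isPositive htop hTpos hTenergy) hTpos.isSymmetric hTne
    (commute_of_tendsto_inner hT (hcomm.mono_left (Ultrafilter.of_le l)))
  exact ⟨T y, hx, hVx, memH1_apply_of_isPositive hlam hTpos hTenergy y⟩

end Eigenvector

section ApproxOrbit

open Filter Topology

variable {H : Type*} [NormedAddCommGroup H] [InnerProductSpace ℂ H] {e : HilbertBasis ℕ ℂ H}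
  {lam : ℕ → ℝ} {V : H →L[ℂ] H} {δ C κ : ℝ} {n : ℕ} {a : ℕ → H}

/-- An approximate orbit of `V` of length `n`: vectors of `H¹(Γ)` with norms between `δ` and `1` and
mean energy at most `C`, each mapped by `V` near the next one, with squared errors of total at most
`κ`. The endpoint `a n` is only required to lie in the unit ball. -/
structure IsApproxOrbit (e : HilbertBasis ℕ ℂ H) (lam : ℕ → ℝ) (V : H →L[ℂ] H) (δ C κ : ℝ)
    (n : ℕ) (a : ℕ → H) : Prop where
  norm_le_one : ∀ k ≤ n, ‖a k‖ ≤ 1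
  le_norm : ∀ k < n, δ ≤ ‖a k‖
  memH1 : ∀ k < n, MemH1 e lam (a k)
  sum_H1energy_le : ∑ k ∈ Finset.range n, H1energy e lam (a k) ≤ C * n
  sum_norm_sub_sq_le : ∑ k ∈ Finset.range n, ‖a (k + 1) - V (a k)‖ ^ 2 ≤ κ

theorem IsApproxOrbit.of_le {δ' : ℝ} (h : IsApproxOrbit e lam V δ C κ n a) (hδ : δ' ≤ δ) :
    IsApproxOrbit e lam V δ' C κ n a :=
  { h with le_norm := fun k hk => hδ.trans (h.le_norm k hk) }

theorem IsApproxOrbit.sum_norm_sub_le (h : IsApproxOrbit e lam V δ C κ n a) :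
    ∑ k ∈ Finset.range n, ‖a (k + 1) - V (a k)‖ ≤ √(n * κ) := by
  refine Real.le_sqrt_of_sq_le (sq_sum_le_card_mul_sum_sq.trans ?_)
  rw [Finset.card_range]
  exact mul_le_mul_of_nonneg_left h.sum_norm_sub_sq_le n.cast_nonneg

theorem IsApproxOrbit.sum_mul_inner_meanRankOne_le (hlam : ∀ j, 0 ≤ lam j)
    (h : IsApproxOrbit e lam V δ C κ n a) (hn : n ≠ 0) (F : Finset ℕ) :
    ∑ j ∈ F, lam j * (⟪e j, meanRankOne ℂ n a (e j)⟫_ℂ).re ≤ C := by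
  have hpartial (k : ℕ) (hk : k < n) :
      ∑ j ∈ F, lam j * ‖⟪e j, a k⟫_ℂ‖ ^ 2 ≤ H1energy e lam (a k) :=
    sum_le_hasSum F (fun j _ => mul_nonneg (hlam j) (sq_nonneg _))
      (hasSum_H1energy hlam (h.memH1 k hk))
  calc ∑ j ∈ F, lam j * (⟪e j, meanRankOne ℂ n a (e j)⟫_ℂ).re
      = (n : ℝ)⁻¹ * ∑ k ∈ Finset.range n, ∑ j ∈ F, lam j * ‖⟪e j, a k⟫_ℂ‖ ^ 2 := by
        simp only [← RCLike.re_eq_complex_re, re_inner_meanRankOne_apply, mul_left_comm (lam _),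
          Finset.mul_sum]
        exact Finset.sum_comm
    _ ≤ (n : ℝ)⁻¹ * (C * n) := by
        gcongr
        exact (Finset.sum_le_sum fun k hk => hpartial k (Finset.mem_range.1 hk)).trans
          h.sum_H1energy_le
    _ = C := by field_simp

theorem IsApproxOrbit.le_sum_inner_meanRankOne (hlam : ∀ j, 0 ≤ lam j)
    (h : IsApproxOrbit e lam V δ C κ n a) (hδ : 0 ≤ δ) (hn : n ≠ 0) {s : Finset ℕ} {K : ℝ}
    (hK0 : 0 ≤ K) (hK : ∀ j ∉ s, K ≤ lam j) :
    K * δ ^ 2 ≤ C + K * ∑ j ∈ s, (⟪e j, meanRankOne ℂ n a (e j)⟫_ℂ).re := by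
  have hterm (k : ℕ) (hk : k < n) :
      K * δ ^ 2 ≤ H1energy e lam (a k) + K * ∑ j ∈ s, ‖⟪e j, a k⟫_ℂ‖ ^ 2 :=
    (mul_le_mul_of_nonneg_left (pow_le_pow_left₀ hδ (h.le_norm k hk) 2) hK0).trans
      (mul_norm_sq_le_H1energy_add hlam (h.memH1 k hk) hK)
  calc K * δ ^ 2 = (n : ℝ)⁻¹ * ∑ k ∈ Finset.range n, K * δ ^ 2 := by
        rw [Finset.sum_const, Finset.card_range, nsmul_eq_mul, inv_mul_cancel_left₀]
        exact_mod_cast hn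
    _ ≤ (n : ℝ)⁻¹ * ∑ k ∈ Finset.range n,
          (H1energy e lam (a k) + K * ∑ j ∈ s, ‖⟪e j, a k⟫_ℂ‖ ^ 2) := by
        gcongr with k hk
        exact hterm k (Finset.mem_range.1 hk)
    _ = (n : ℝ)⁻¹ * ∑ k ∈ Finset.range n, H1energy e lam (a k) +
          K * ∑ j ∈ s, (⟪e j, meanRankOne ℂ n a (e j)⟫_ℂ).re := by
        simp only [← RCLike.re_eq_complex_re, re_inner_meanRankOne_apply]
        rw [Finset.sum_add_distrib, mul_add, ← Finset.mul_sum, ← Finset.mul_sum, Finset.sum_comm]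
        ring
    _ ≤ (n : ℝ)⁻¹ * (C * n) + K * ∑ j ∈ s, (⟪e j, meanRankOne ℂ n a (e j)⟫_ℂ).re := by
        gcongr
        exact h.sum_H1energy_le
    _ = C + K * ∑ j ∈ s, (⟪e j, meanRankOne ℂ n a (e j)⟫_ℂ).re := by
        field_simp

variable [CompleteSpace H]

theorem IsApproxOrbit.norm_commutator_le (h : IsApproxOrbit e lam V δ C κ n a)
    (hV : V ∈ unitary (H →L[ℂ] H)) :
    ‖V * meanRankOne ℂ n a - meanRankOne ℂ n a * V‖ ≤ 2 / n + 2 * √(κ / n) := by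
  calc ‖V * meanRankOne ℂ n a - meanRankOne ℂ n a * V‖
      ≤ (n : ℝ)⁻¹ * (2 + 2 * √(n * κ)) := by
        refine (norm_commutator_meanRankOne_le hV h.norm_le_one).trans ?_
        gcongr
        exact h.sum_norm_sub_le
    _ = 2 / n + 2 * √(κ / n) := by
        have hsqrt : (n : ℝ)⁻¹ * √(n * κ) = √(κ / n) := by
          rw [Real.sqrt_mul n.cast_nonneg, Real.sqrt_div' κ n.cast_nonneg, ← mul_assoc,
            inv_mul_eq_div, Real.sqrt_div_self, inv_mul_eq_div]
        rw [mul_add, mul_left_comm, hsqrt, inv_mul_eq_div]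

theorem exists_eigenvector_memH1_of_frequently_isApproxOrbit (hlam : ∀ j, 0 ≤ lam j)
    (htop : Tendsto lam atTop atTop) (hV : V ∈ unitary (H →L[ℂ] H)) (hδ : 0 < δ)
    (h : ∃ᶠ n in atTop, ∃ a, IsApproxOrbit e lam V δ C κ n a) :
    ∃ x ≠ 0, (∃ μ : ℂ, V x = μ • x) ∧ MemH1 e lam x := by
  obtain ⟨m, hm, hm'⟩ := extraction_of_frequently_atTop (h.and_eventually (eventually_ne_atTop 0))
  choose a ha using fun i => (hm' i).1
  have hm0 (i : ℕ) : m i ≠ 0 := (hm' i).2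
  obtain ⟨K, hK, hCK⟩ : ∃ K, 0 < K ∧ C < K * δ ^ 2 :=
    ((eventually_gt_atTop 0).and ((tendsto_id.atTop_mul_const (by positivity)).eventually_gt_atTop
      C)).exists
  obtain ⟨J, hJ⟩ := eventually_atTop.1 (htop.eventually_ge_atTop K)
  have hbound : Tendsto (fun n : ℕ => 2 / (n : ℝ) + 2 * √(κ / n)) atTop (𝓝 0) := by
    simpa using (tendsto_const_div_atTop_nhds_zero_nat 2).add
      ((tendsto_const_div_atTop_nhds_zero_nat κ).sqrt.const_mul 2)
  refine exists_eigenvector_memH1_of_commutator_tendsto_zero (l := atTop) (c := 1) (C := C)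
    (D := fun i => meanRankOne ℂ (m i) (a i)) (s := Finset.range J) (κ := δ ^ 2 - C / K) hlam htop
    (fun i => isPositive_meanRankOne _ _)
    (fun i => norm_meanRankOne_le_one fun k hk => (ha i).norm_le_one k hk.le)
    (squeeze_zero_norm (fun i => (ha i).norm_commutator_le hV)
      (hbound.comp hm.tendsto_atTop))
    (fun i => (ha i).sum_mul_inner_meanRankOne_le hlam (hm0 i)) ?_ fun i => ?_
  · rwa [sub_pos, div_lt_iff₀' hK]
  · have hmass := (ha i).le_sum_inner_meanRankOne hlam hδ.le (hm0 i) (s := Finset.range J) hK.le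
      fun j hj => hJ j (by simpa using hj)
    rw [← sub_le_iff_le_add', ← div_le_iff₀' hK, sub_div, mul_div_cancel_left₀ _ hK.ne'] at hmass
    exact hmass

end ApproxOrbit

section Evolution

open Set ContinuousLinearMap

variable {H : Type*} [NormedAddCommGroup H] [InnerProductSpace ℂ H]

theorem hasDerivAt_norm_sq_sub {A : H →ₗ[ℂ] H} {f g : ℝ → H} {w : H} {t : ℝ}
    (hA : ⟪A (f t - g t), f t - g t⟫_ℂ = ⟪f t - g t, A (f t - g t)⟫_ℂ)
    (hf : HasDerivAt f (Complex.I • A (f t) - w) t) (hg : HasDerivAt g (Complex.I • A (g t)) t) :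
    HasDerivAt (fun s => ‖f s - g s‖ ^ 2) (-2 * (⟪f t - g t, w⟫_ℂ).re) t := by
  have hskew : (⟪f t - g t, Complex.I • A (f t - g t)⟫_ℂ).re = 0 := by
    have him := congrArg Complex.im hA
    rw [← inner_conj_symm, Complex.conj_im] at him
    rw [inner_smul_right, Complex.I_mul_re]
    linarith
  let : InnerProductSpace ℝ H := .complexToReal
  have h : HasDerivAt (fun s => ‖f s - g s‖ ^ 2)
      (2 * (⟪f t - g t, Complex.I • A (f t) - w - Complex.I • A (g t)⟫_ℂ).re) t :=
    (hf.sub hg).norm_sq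
  convert! h using 1
  rw [sub_right_comm, ← smul_sub, ← map_sub, inner_sub_right, Complex.sub_re, hskew]
  ring

theorem exists_sum_range_deriv_eq_sub {f f' : ℝ → ℝ} {n : ℕ} (hf : ContinuousOn f (Icc 0 n))
    (hf' : ∀ t ∈ Ioo (0 : ℝ) n, HasDerivAt f (f' t) t) :
    ∃ s ∈ Ioo (0 : ℝ) 1, ∑ k ∈ Finset.range n, f' (s + k) = f n - f 0 := by
  have hle {k : ℕ} (hk : k ∈ Finset.range n) : (k : ℝ) + 1 ≤ n := by
    exact_mod_cast Finset.mem_range.1 hk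
  obtain ⟨s, hs, hslope⟩ := exists_hasDerivAt_eq_slope
    (fun s => ∑ k ∈ Finset.range n, f (s + k)) (fun s => ∑ k ∈ Finset.range n, f' (s + k))
    (zero_lt_one' ℝ)
    (continuousOn_finsetSum _ fun k hk => hf.comp (by fun_prop) fun s hs =>
      ⟨add_nonneg hs.1 k.cast_nonneg, by linarith [hs.2, hle hk]⟩)
    (fun s hs => HasDerivAt.fun_sum fun k hk => (hf' _
      ⟨add_pos_of_pos_of_nonneg hs.1 k.cast_nonneg, by linarith [hs.2, hle hk]⟩).comp_add_const
        s (k : ℝ))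
  refine ⟨s, hs, hslope.trans ?_⟩
  rw [sub_zero, div_one, ← Finset.sum_sub_distrib]
  simpa [add_comm] using Finset.sum_range_sub (fun k : ℕ => f k) n

/-- Symmetry of an operator on the domain `H¹(Γ)`. -/
def IsSymmetricOnH1 (e : ℕ → H) (lam : ℕ → ℝ) (A : H →ₗ[ℂ] H) : Prop :=
  ∀ x y, MemH1 e lam x → MemH1 e lam y → ⟪A x, y⟫_ℂ = ⟪x, A y⟫_ℂ

variable [CompleteSpace H]

/-- A unitary solution operator of `ψ' = iL(t)ψ` preserving `H¹(Γ)`, where `M` bounds the growth of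
the squared `H¹(Γ)` norm over times at most one. -/
structure IsH1Propagator (e : ℕ → H) (lam : ℕ → ℝ) (L : ℝ → H →ₗ[ℂ] H) (U : ℝ → H →L[ℂ] H)
    (M : ℝ) : Prop where
  mem_unitary : ∀ t, U t ∈ unitary (H →L[ℂ] H)
  map_zero : U 0 = 1
  hasDerivAt : ∀ ψ, MemH1 e lam ψ → ∀ t, HasDerivAt (fun s => U s ψ) (Complex.I • L t (U t ψ)) t
  memH1 : ∀ s t ψ, MemH1 e lam ψ → MemH1 e lam (U t (adjoint (U s) ψ))
  H1energy_le : ∀ s t ψ, |t - s| ≤ 1 → MemH1 e lam ψ →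
    H1energy e lam (U t (adjoint (U s) ψ)) ≤ M * H1energy e lam ψ
  bound_nonneg : 0 ≤ M

/-- A solution of `φ' = iL(t)φ - εΓφ` in the interior of `[0, T]`, continuous up to the
endpoints. -/
structure IsDissipativeSolution (e : ℕ → H) (lam : ℕ → ℝ) (L : ℝ → H →ₗ[ℂ] H) (ε T : ℝ)
    (φ : ℝ → H) : Prop where
  continuousOn : ContinuousOn φ (Icc 0 T)
  memH2 : ∀ t ∈ Ioo 0 T, MemH2 e lam (φ t)
  hasDerivAt : ∀ t ∈ Ioo 0 T, HasDerivAt φ (Complex.I • L t (φ t) - ε • Gam e lam (φ t)) t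

variable {e : HilbertBasis ℕ ℂ H} {lam : ℕ → ℝ} {L : ℝ → H →ₗ[ℂ] H} {U : ℝ → H →L[ℂ] H}
  {M ε T : ℝ} {φ : ℝ → H}

theorem mem_unitary_of_inner_map_map_of_surjective {V : H →L[ℂ] H}
    (hinner : ∀ x y, ⟪V x, V y⟫_ℂ = ⟪x, y⟫_ℂ) (hsurj : Function.Surjective V) :
    V ∈ unitary (H →L[ℂ] H) := by
  have hleft : adjoint V ∘L V = 1 := (inner_map_map_iff_adjoint_comp_self V).1 hinner
  refine Unitary.mem_iff.2 ⟨hleft, ContinuousLinearMap.ext fun x => ?_⟩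
  obtain ⟨y, rfl⟩ := hsurj x
  exact congrArg V (congrArg (· y) hleft)

theorem exists_isH1Propagator (hlam : ∀ j, 0 ≤ lam j)
    (hiso : ∀ t x y, ⟪U t x, U t y⟫_ℂ = ⟪x, y⟫_ℂ) (hsurj : ∀ t, Function.Surjective (U t))
    (hzero : U 0 = 1)
    (hderiv : ∀ ψ, MemH1 e lam ψ → ∀ t, HasDerivAt (fun s => U s ψ) (Complex.I • L t (U t ψ)) t)
    {B : ℝ → ℝ} (hB : ∀ s, 0 ≤ B s) (hBbdd : ∃ b, ∀ s ∈ Icc (-1 : ℝ) 1, B s ≤ b)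
    (hgrowth : ∀ s t ψ, MemH1 e lam ψ → H1normSq e lam (U t (adjoint (U s) ψ)) ≤
      ENNReal.ofReal (B (t - s) ^ 2) * H1normSq e lam ψ) :
    ∃ M, IsH1Propagator e lam L U M := by
  obtain ⟨b, hb⟩ := hBbdd
  refine ⟨b ^ 2, fun t => ?_, hzero, hderiv,
    fun s t ψ hψ => memH1_of_H1normSq_le hψ (hgrowth s t ψ hψ), fun s t ψ hst hψ => ?_, sq_nonneg b⟩
  · exact mem_unitary_of_inner_map_map_of_surjective (hiso t) (hsurj t)
  · exact (H1energy_le_of_H1normSq_le hlam (sq_nonneg _) hψ (hgrowth s t ψ hψ)).trans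
      (mul_le_mul_of_nonneg_right (pow_le_pow_left₀ (hB _) (hb _ (abs_le.1 hst)) 2)
        (H1energy_nonneg hlam e ψ))

namespace IsH1Propagator

theorem memH1_apply (hU : IsH1Propagator e lam L U M) {ψ : H} (hψ : MemH1 e lam ψ) (t : ℝ) :
    MemH1 e lam (U t ψ) := by
  simpa only [hU.map_zero, ← star_eq_adjoint, star_one, one_apply_eq_self] using hU.memH1 0 t ψ hψ

theorem memH1_adjoint_apply (hU : IsH1Propagator e lam L U M) {ψ : H} (hψ : MemH1 e lam ψ)
    (t : ℝ) : MemH1 e lam (adjoint (U t) ψ) := by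
  simpa only [hU.map_zero, one_apply_eq_self] using hU.memH1 t 0 ψ hψ

theorem H1energy_adjoint_le (hU : IsH1Propagator e lam L U M) {ψ : H} (hψ : MemH1 e lam ψ)
    {t : ℝ} (ht : |t| ≤ 1) : H1energy e lam (adjoint (U t) ψ) ≤ M * H1energy e lam ψ := by
  simpa only [hU.map_zero, one_apply_eq_self] using
    hU.H1energy_le t 0 ψ (by rwa [zero_sub, abs_neg]) hψ

theorem map_add_one (hU : IsH1Propagator e lam L U M) (hlam : ∀ j, 0 ≤ lam j)
    (hsymm : ∀ t, IsSymmetricOnH1 e lam (L t)) (hper : L.Periodic 1) (t : ℝ) :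
    U (t + 1) = U t * U 1 := by
  have hderiv (j : ℕ) (s : ℝ) :
      HasDerivAt (fun s => ‖U (s + 1) (e j) - U s (U 1 (e j))‖ ^ 2) 0 s := by
    have hj := memH1_of_orthonormal hlam e.orthonormal j
    have hj1 := hU.memH1_apply hj 1
    have hmem := (hU.memH1_apply hj (s + 1)).sub hlam (hU.memH1_apply hj1 s)
    have hshift := (hU.hasDerivAt _ hj (s + 1)).comp_add_const s 1
    rw [hper s, ← sub_zero (Complex.I • _)] at hshift
    simpa only [inner_zero_right, Complex.zero_re, mul_zero] using
      hasDerivAt_norm_sq_sub (f := fun s => U (s + 1) (e j)) (g := fun s => U s (U 1 (e j)))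
        (hsymm s _ _ hmem hmem) hshift (hU.hasDerivAt _ hj1 s)
  have hconst (j : ℕ) := is_const_of_deriv_eq_zero (fun s => (hderiv j s).differentiableAt)
    (fun s => (hderiv j s).deriv) t 0
  refine ContinuousLinearMap.ext_on
    ((Submodule.dense_iff_topologicalClosure_eq_top).2 e.dense_span) ?_
  rintro _ ⟨j, rfl⟩
  simpa [hU.map_zero, sub_eq_zero] using hconst j

theorem map_add_nat (hU : IsH1Propagator e lam L U M) (hlam : ∀ j, 0 ≤ lam j)
    (hsymm : ∀ t, IsSymmetricOnH1 e lam (L t)) (hper : L.Periodic 1) (t : ℝ) (k : ℕ) :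
    U (t + k) = U t * U 1 ^ k := by
  induction k with
  | zero => simp
  | succ k ih =>
    rw [Nat.cast_succ, ← add_assoc, hU.map_add_one hlam hsymm hper, ih, pow_succ, mul_assoc]

theorem map_add_nat_add_one_mul_star (hU : IsH1Propagator e lam L U M) (hlam : ∀ j, 0 ≤ lam j)
    (hsymm : ∀ t, IsSymmetricOnH1 e lam (L t)) (hper : L.Periodic 1) (t : ℝ) (k : ℕ) :
    U (t + k + 1) * star (U (t + k)) = U t * U 1 * star (U t) := by
  have hcancel : U 1 ^ k * star (U 1 ^ k) = 1 :=
    Unitary.mul_star_self_of_mem (pow_mem (hU.mem_unitary 1) k)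
  calc U (t + k + 1) * star (U (t + k))
      = U t * (U 1 * (U 1 ^ k * star (U 1 ^ k))) * star (U t) := by
        rw [add_assoc, ← Nat.cast_succ, hU.map_add_nat hlam hsymm hper,
          hU.map_add_nat hlam hsymm hper, pow_succ', star_mul]
        simp only [mul_assoc]
    _ = U t * U 1 * star (U t) := by rw [hcancel, mul_one]

end IsH1Propagator

namespace IsDissipativeSolution

theorem hasDerivAt_norm_sq (hφ : IsDissipativeSolution e lam L ε T φ) (hlam : ∀ j, 0 ≤ lam j)
    (hsymm : ∀ t, IsSymmetricOnH1 e lam (L t)) {t : ℝ} (ht : t ∈ Ioo 0 T) :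
    HasDerivAt (fun s => ‖φ s‖ ^ 2) (-2 * ε * H1energy e lam (φ t)) t := by
  have hmem := (hφ.memH2 t ht).memH1 hlam
  have h := hasDerivAt_norm_sq_sub (A := L t) (g := fun _ => 0)
    (by simpa only [sub_zero] using hsymm t _ _ hmem hmem) (hφ.hasDerivAt t ht)
    (by simpa using hasDerivAt_const t (0 : H))
  simpa only [sub_zero, inner_smul_right_eq_smul, Complex.smul_re, smul_eq_mul,
    re_inner_Gam_self (hφ.memH2 t ht), mul_assoc] using h

theorem antitoneOn_norm (hφ : IsDissipativeSolution e lam L ε T φ) (hlam : ∀ j, 0 ≤ lam j)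
    (hsymm : ∀ t, IsSymmetricOnH1 e lam (L t)) (hε : 0 ≤ ε) :
    AntitoneOn (fun t => ‖φ t‖) (Icc 0 T) := by
  have hsq : AntitoneOn (fun t => ‖φ t‖ ^ 2) (Icc 0 T) := by
    refine antitoneOn_of_hasDerivWithinAt_nonpos (convex_Icc 0 T) (hφ.continuousOn.norm.pow 2)
      (f' := fun t => -2 * ε * H1energy e lam (φ t)) ?_ ?_
    · rw [interior_Icc]
      exact fun t ht => (hφ.hasDerivAt_norm_sq hlam hsymm ht).hasDerivWithinAt
    · exact fun t _ => mul_nonpos_of_nonpos_of_nonneg (by linarith) (H1energy_nonneg hlam e _)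
  exact fun s hs t ht hst => le_of_sq_le_sq (hsq hs ht hst) (norm_nonneg _)

theorem exists_sum_H1energy_le (hφ : IsDissipativeSolution e lam L ε T φ) (hlam : ∀ j, 0 ≤ lam j)
    (hsymm : ∀ t, IsSymmetricOnH1 e lam (L t)) {n : ℕ} (hn : n ≤ T) :
    ∃ s ∈ Ioo (0 : ℝ) 1, 2 * ε * ∑ k ∈ Finset.range n, H1energy e lam (φ (s + k)) ≤ ‖φ 0‖ ^ 2 := by
  obtain ⟨s, hs, hsum⟩ := exists_sum_range_deriv_eq_sub
    ((hφ.continuousOn.norm.pow 2).mono (Icc_subset_Icc_right hn))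
    fun t ht => hφ.hasDerivAt_norm_sq hlam hsymm (Ioo_subset_Ioo_right hn ht)
  refine ⟨s, hs, ?_⟩
  rw [← Finset.mul_sum] at hsum
  simp only [Pi.pow_apply] at hsum
  linarith [sq_nonneg ‖φ n‖]

theorem norm_sub_propagator_sq_le (hφ : IsDissipativeSolution e lam L ε T φ)
    (hU : IsH1Propagator e lam L U M) (hlam : ∀ j, 0 ≤ lam j)
    (hsymm : ∀ t, IsSymmetricOnH1 e lam (L t)) (hε : 0 ≤ ε) {t : ℝ} (ht : 0 < t)
    (htT : t + 1 < T) :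
    ‖φ (t + 1) - U (t + 1) (adjoint (U t) (φ t))‖ ^ 2 ≤ ε / 2 * (M * H1energy e lam (φ t)) := by
  have hmem := (hφ.memH2 t ⟨ht, by linarith⟩).memH1 hlam
  set g : ℝ → H := fun r => U r (adjoint (U t) (φ t))
  have hgmem (r : ℝ) : MemH1 e lam (g r) := hU.memH1 t r _ hmem
  have hIoo {r : ℝ} (hr : r ∈ Icc t (t + 1)) : r ∈ Ioo 0 T :=
    ⟨by linarith [hr.1], by linarith [hr.2]⟩
  have hderiv (r : ℝ) (hr : r ∈ Icc t (t + 1)) : HasDerivAt (fun r => ‖φ r - g r‖ ^ 2)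
      (-2 * (⟪φ r - g r, ε • Gam e lam (φ r)⟫_ℂ).re) r := by
    have hsub := ((hφ.memH2 r (hIoo hr)).memH1 hlam).sub hlam (hgmem r)
    exact hasDerivAt_norm_sq_sub (hsymm r _ _ hsub hsub) (hφ.hasDerivAt r (hIoo hr))
      (hU.hasDerivAt _ (hU.memH1_adjoint_apply hmem t) r)
  have hderiv_le (r : ℝ) (hr : r ∈ Icc t (t + 1)) :
      -2 * (⟪φ r - g r, ε • Gam e lam (φ r)⟫_ℂ).re ≤ ε / 2 * (M * H1energy e lam (φ t)) := by
    have hΓ := re_inner_Gam_le hlam (hφ.memH2 r (hIoo hr)) (hgmem r)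
    have hgrowth : H1energy e lam (g r) ≤ M * H1energy e lam (φ t) :=
      hU.H1energy_le t r _ (abs_le.2 ⟨by linarith [hr.1], by linarith [hr.2]⟩) hmem
    rw [inner_smul_right_eq_smul, Complex.smul_re, smul_eq_mul, inner_sub_left, Complex.sub_re,
      re_inner_Gam_self (hφ.memH2 r (hIoo hr))]
    calc -2 * (ε * (H1energy e lam (φ r) - (⟪g r, Gam e lam (φ r)⟫_ℂ).re))
        = ε / 2 * (4 * ((⟪g r, Gam e lam (φ r)⟫_ℂ).re - H1energy e lam (φ r))) := by ring
      _ ≤ ε / 2 * (M * H1energy e lam (φ t)) := by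
          refine mul_le_mul_of_nonneg_left ?_ (by positivity)
          linarith
  have hmean := (convex_Icc t (t + 1)).image_sub_le_mul_sub_of_deriv_le
    (fun r hr => (hderiv r hr).continuousAt.continuousWithinAt)
    (fun r hr => (hderiv r (interior_subset hr)).differentiableAt.differentiableWithinAt)
    (fun r hr => (hderiv r (interior_subset hr)).deriv.trans_le (hderiv_le r (interior_subset hr)))
    t (left_mem_Icc.2 (by linarith)) (t + 1) (right_mem_Icc.2 (by linarith)) (by linarith)
  have hgt : g t = φ t := congrArg (· (φ t)) (Unitary.mul_star_self_of_mem (hU.mem_unitary t))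
  simpa [hgt] using hmean

theorem norm_adjoint_sub_sq_le (hφ : IsDissipativeSolution e lam L ε T φ)
    (hU : IsH1Propagator e lam L U M) (hlam : ∀ j, 0 ≤ lam j)
    (hsymm : ∀ t, IsSymmetricOnH1 e lam (L t)) (hper : L.Periodic 1) (hε : 0 ≤ ε) {s : ℝ}
    (hs : 0 < s) {k : ℕ} (hk : s + k + 1 < T) :
    ‖adjoint (U s) (φ (s + k + 1)) - U 1 (adjoint (U s) (φ (s + k)))‖ ^ 2 ≤
      ε / 2 * (M * H1energy e lam (φ (s + k))) := by
  have hcancel (x : H) : adjoint (U s) (U s x) = x :=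
    congrArg (· x) (Unitary.star_mul_self_of_mem (hU.mem_unitary s))
  have hshift (x : H) : U (s + k + 1) (adjoint (U (s + k)) x) = U s (U 1 (adjoint (U s) x)) :=
    congrArg (· x) (hU.map_add_nat_add_one_mul_star hlam hsymm hper s k)
  have hadjoint (x : H) : ‖adjoint (U s) x‖ = ‖x‖ :=
    norm_map_of_mem_unitary (Unitary.star_mem (hU.mem_unitary s)) x
  rw [← hcancel (U 1 _), ← hshift, ← map_sub, hadjoint]
  exact hφ.norm_sub_propagator_sq_le hU hlam hsymm hε
    (add_pos_of_pos_of_nonneg hs k.cast_nonneg) hk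

theorem isApproxOrbit (hφ : IsDissipativeSolution e lam L ε T φ)
    (hU : IsH1Propagator e lam L U M) (hlam : ∀ j, 0 ≤ lam j)
    (hsymm : ∀ t, IsSymmetricOnH1 e lam (L t)) (hper : L.Periodic 1) (hε : 0 < ε)
    (hφ0 : ‖φ 0‖ ≤ 1) {n : ℕ} (hn : n + 1 ≤ T) {s : ℝ} (hs : s ∈ Ioo (0 : ℝ) 1)
    (hsum : 2 * ε * ∑ k ∈ Finset.range n, H1energy e lam (φ (s + k)) ≤ 1) {C : ℝ}
    (hC : M ≤ 2 * ε * (C * n)) :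
    IsApproxOrbit e lam (U 1) ‖φ T‖ C (M / 4) n fun k => adjoint (U s) (φ (s + k)) := by
  have hIoo {k : ℕ} (hk : k ≤ n) : s + k ∈ Ioo 0 T := by
    have hkn : (k : ℝ) ≤ n := by exact_mod_cast hk
    exact ⟨add_pos_of_pos_of_nonneg hs.1 k.cast_nonneg, by linarith [hs.2]⟩
  have hIcc {k : ℕ} (hk : k ≤ n) : s + k ∈ Icc 0 T := Ioo_subset_Icc_self (hIoo hk)
  have hT : 0 ≤ T := by linarith [n.cast_nonneg (α := ℝ)]
  have hanti := hφ.antitoneOn_norm hlam hsymm hε.le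
  have hadjoint (x : H) : ‖adjoint (U s) x‖ = ‖x‖ :=
    norm_map_of_mem_unitary (Unitary.star_mem (hU.mem_unitary s)) x
  have hmem {k : ℕ} (hk : k < n) : MemH1 e lam (φ (s + k)) :=
    (hφ.memH2 _ (hIoo hk.le)).memH1 hlam
  have hMsum := mul_le_mul_of_nonneg_left hsum hU.bound_nonneg
  refine ⟨fun k hk => ?_, fun k hk => ?_, fun k hk => hU.memH1_adjoint_apply (hmem hk) s, ?_, ?_⟩
  · rw [hadjoint]
    exact (hanti (left_mem_Icc.2 hT) (hIcc hk) (hIcc hk).1).trans hφ0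
  · rw [hadjoint]
    exact hanti (hIcc hk.le) (right_mem_Icc.2 hT) (hIcc hk.le).2
  · have hle : ∑ k ∈ Finset.range n, H1energy e lam (adjoint (U s) (φ (s + k))) ≤
        M * ∑ k ∈ Finset.range n, H1energy e lam (φ (s + k)) := by
      rw [Finset.mul_sum]
      exact Finset.sum_le_sum fun k hk => hU.H1energy_adjoint_le (hmem (Finset.mem_range.1 hk))
        ((abs_of_pos hs.1).trans_le hs.2.le)
    refine le_of_mul_le_mul_left ?_ (by positivity : 0 < 2 * ε)
    linarith [mul_le_mul_of_nonneg_left hle (by positivity : 0 ≤ 2 * ε)]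
  · have hstep (k : ℕ) (hk : k ∈ Finset.range n) :
        ‖adjoint (U s) (φ (s + (k + 1 : ℕ))) - U 1 (adjoint (U s) (φ (s + k)))‖ ^ 2 ≤
          ε / 2 * (M * H1energy e lam (φ (s + k))) := by
      have hkT := (hIoo (Finset.mem_range.1 hk)).2
      rw [Nat.cast_succ, ← add_assoc] at hkT ⊢
      exact hφ.norm_adjoint_sub_sq_le hU hlam hsymm hper hε.le hs.1 hkT
    refine (Finset.sum_le_sum hstep).trans ?_
    rw [← Finset.mul_sum, ← Finset.mul_sum]
    linarith

theorem exists_isApproxOrbit {τ : ℝ} (hφ : IsDissipativeSolution e lam L ε (τ / ε) φ)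
    (hU : IsH1Propagator e lam L U M) (hlam : ∀ j, 0 ≤ lam j)
    (hsymm : ∀ t, IsSymmetricOnH1 e lam (L t)) (hper : L.Periodic 1) (hτ : 0 < τ) (hε : 0 < ε)
    (hφ0 : ‖φ 0‖ ≤ 1) {N : ℕ} (hN : N + 3 ≤ τ / ε) :
    ∃ n ≥ N, ∃ a, IsApproxOrbit e lam (U 1) ‖φ (τ / ε)‖ (M / τ) (M / 4) n a := by
  have hfloor : N + 3 ≤ ⌊τ / ε⌋₊ := Nat.le_floor (by exact_mod_cast hN)
  obtain ⟨n, hn⟩ : ∃ n, ⌊τ / ε⌋₊ = n + 1 := ⟨⌊τ / ε⌋₊ - 1, by omega⟩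
  have hn2 : (2 : ℝ) ≤ n := by exact_mod_cast (by omega : 2 ≤ n)
  have hle : (n : ℝ) + 1 ≤ τ / ε := by
    exact_mod_cast hn ▸ Nat.floor_le (div_pos hτ hε).le
  have hlt : τ / ε < n + 2 := by
    have := Nat.lt_floor_add_one (τ / ε)
    rw [hn] at this
    push_cast at this
    linarith
  obtain ⟨s, hs, hsum⟩ := hφ.exists_sum_H1energy_le hlam hsymm (n := n) (by linarith)
  refine ⟨n, by omega, _, hφ.isApproxOrbit hU hlam hsymm hper hε hφ0 hle hs
    (hsum.trans (pow_le_one₀ (norm_nonneg _) hφ0)) ?_⟩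
  have hτn : τ ≤ 2 * ε * n := by
    rw [div_lt_iff₀ hε] at hlt
    nlinarith
  calc M = M / τ * τ := by field_simp
    _ ≤ M / τ * (2 * ε * n) := mul_le_mul_of_nonneg_left hτn (div_nonneg hU.bound_nonneg hτ.le)
    _ = 2 * ε * (M / τ * n) := by ring

end IsDissipativeSolution

end Evolution

theorem statement10_general {H : Type*} [NormedAddCommGroup H] [InnerProductSpace ℂ H]
    [CompleteSpace H] (e : HilbertBasis ℕ ℂ H) (lam : ℕ → ℝ) (hlam : ∀ j, 0 ≤ lam j)
    (hlam_top : Filter.Tendsto lam Filter.atTop Filter.atTop)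
    (L : ℝ → H →ₗ[ℂ] H)
    (hLsym : ∀ t : ℝ, ∀ x y : H, MemH1 (⇑e) lam x → MemH1 (⇑e) lam y →
      ⟪L t x, y⟫_ℂ = ⟪x, L t y⟫_ℂ)
    (hLper : ∀ t : ℝ, L (t + 1) = L t)
    (U : ℝ → H →L[ℂ] H)
    (hUiso : ∀ t : ℝ, ∀ x y : H, ⟪U t x, U t y⟫_ℂ = ⟪x, y⟫_ℂ)
    (hUsurj : ∀ t : ℝ, Function.Surjective (U t))
    (hU0 : U 0 = ContinuousLinearMap.id ℂ H)
    (hUgen : ∀ ψ : H, MemH1 (⇑e) lam ψ → ∀ t : ℝ,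
      HasDerivAt (fun s => U s ψ) (Complex.I • L t (U t ψ)) t)
    (B : ℝ → ℝ) (hBnonneg : ∀ s, 0 ≤ B s)
    (hBloc : ∀ R : ℝ, ∃ M : ℝ, ∀ s ∈ Set.Icc (-R) R, B s ≤ M)
    (hcond2 : ∀ s t : ℝ, ∀ ψ : H, MemH1 (⇑e) lam ψ →
      H1normSq (⇑e) lam (U t (ContinuousLinearMap.adjoint (U s) ψ)) ≤
        ENNReal.ofReal (B (t - s) ^ 2) * H1normSq (⇑e) lam ψ)
    (hnoeig : ∀ ψ : H, ψ ≠ 0 → (∃ μ : ℂ, U 1 ψ = μ • ψ) → ¬ MemH1 (⇑e) lam ψ) :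
    ∀ τ δ : ℝ, 0 < τ → 0 < δ → ∃ ε₀ : ℝ, 0 < ε₀ ∧
      ∀ ε : ℝ, 0 < ε → ε < ε₀ → ∀ φ₀ : H, ‖φ₀‖ = 1 → ∀ φε : ℝ → H,
        ContinuousOn φε (Set.Icc 0 (τ / ε)) → φε 0 = φ₀ →
        (∀ t ∈ Set.Ioo (0 : ℝ) (τ / ε), MemH2 (⇑e) lam (φε t)) →
        (∀ t ∈ Set.Ioo (0 : ℝ) (τ / ε),
          HasDerivAt φε (Complex.I • L t (φε t) - ε • Gam (⇑e) lam (φε t)) t) →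
        ‖φε (τ / ε)‖ < δ := by
  intro τ δ hτ hδ
  by_contra! hcon
  obtain ⟨M, hU⟩ := exists_isH1Propagator hlam hUiso hUsurj hU0 hUgen hBnonneg (hBloc 1) hcond2
  have horbit : ∃ᶠ n in Filter.atTop, ∃ a, IsApproxOrbit e lam (U 1) δ (M / τ) (M / 4) n a := by
    refine Filter.frequently_atTop.2 fun N => ?_
    obtain ⟨ε, hε, hεN, φ₀, hφ₀, φ, hcont, rfl, hmem, hderiv, hle⟩ :=
      hcon (τ / (N + 3)) (by positivity)
    obtain ⟨n, hn, a, ha⟩ :=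
      IsDissipativeSolution.exists_isApproxOrbit ⟨hcont, hmem, hderiv⟩ hU hlam hLsym hLper hτ hε
        hφ₀.le ((lt_div_comm₀ hε (by positivity)).1 hεN).le
    exact ⟨n, hn, a, ha.of_le hle⟩
  obtain ⟨x, hx, hVx, hx1⟩ := exists_eigenvector_memH1_of_frequently_isApproxOrbit hlam hlam_top
    (hU.mem_unitary 1) hδ horbit
  exact hnoeig x hx hVx hx1

/-- sufficiency direction of Theorem `main`: if the period operator `V = U(1)`
of the unitary evolution generated by the 1-periodic symmetric family `L(t)` has no
eigenvector in `H¹(Γ)`, then the family `L(t)` is relaxation-enhancing: solutions of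
`φ' = iL(t)φ − εΓφ` with unit initial data satisfy `‖φ^ε(τ/ε)‖ < δ` for all small `ε`. -/
theorem statement10 {H : Type*} [NormedAddCommGroup H] [InnerProductSpace ℂ H]
    [CompleteSpace H] [TopologicalSpace.SeparableSpace H]
    (e : HilbertBasis ℕ ℂ H) (lam : ℕ → ℝ)
    (hlam_pos : ∀ j, 0 < lam j) (hlam_mono : Monotone lam)
    (hlam_top : Filter.Tendsto lam Filter.atTop Filter.atTop)
    (L : ℝ → H →ₗ[ℂ] H)
    (hLsym : ∀ t : ℝ, ∀ x y : H, MemH1 (⇑e) lam x → MemH1 (⇑e) lam y →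
      ⟪L t x, y⟫_ℂ = ⟪x, L t y⟫_ℂ)
    (hLper : ∀ t : ℝ, L (t + 1) = L t)
    (C₀ : ℝ)
    (hcond1 : ∀ t : ℝ, ∀ ψ : H, MemH1 (⇑e) lam ψ →
      ENNReal.ofReal (‖L t ψ‖ ^ 2) ≤ ENNReal.ofReal (C₀ ^ 2) * H1normSq (⇑e) lam ψ)
    (U : ℝ → H →L[ℂ] H)
    (hUiso : ∀ t : ℝ, ∀ x y : H, ⟪U t x, U t y⟫_ℂ = ⟪x, y⟫_ℂ)
    (hUsurj : ∀ t : ℝ, Function.Surjective (U t))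
    (hUcont : ∀ ψ : H, Continuous fun t => U t ψ)
    (hU0 : U 0 = ContinuousLinearMap.id ℂ H)
    (hUgen : ∀ ψ : H, MemH1 (⇑e) lam ψ → ∀ t : ℝ,
      HasDerivAt (fun s => U s ψ) (Complex.I • L t (U t ψ)) t)
    (B : ℝ → ℝ) (hBnonneg : ∀ s, 0 ≤ B s)
    (hBloc : ∀ R : ℝ, ∃ M : ℝ, ∀ s ∈ Set.Icc (-R) R, B s ≤ M)
    (hcond2 : ∀ s t : ℝ, ∀ ψ : H, MemH1 (⇑e) lam ψ →
      H1normSq (⇑e) lam (U t (ContinuousLinearMap.adjoint (U s) ψ)) ≤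
        ENNReal.ofReal (B (t - s) ^ 2) * H1normSq (⇑e) lam ψ)
    (hnoeig : ∀ ψ : H, ψ ≠ 0 → (∃ μ : ℂ, U 1 ψ = μ • ψ) → ¬ MemH1 (⇑e) lam ψ) :
    ∀ τ δ : ℝ, 0 < τ → 0 < δ → ∃ ε₀ : ℝ, 0 < ε₀ ∧
      ∀ ε : ℝ, 0 < ε → ε < ε₀ → ∀ φ₀ : H, ‖φ₀‖ = 1 → ∀ φε : ℝ → H,
        ContinuousOn φε (Set.Icc 0 (τ / ε)) → φε 0 = φ₀ →
        (∀ t ∈ Set.Ioo (0 : ℝ) (τ / ε), MemH2 (⇑e) lam (φε t)) →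
        (∀ t ∈ Set.Ioo (0 : ℝ) (τ / ε),
          HasDerivAt φε (Complex.I • L t (φε t) - ε • Gam (⇑e) lam (φε t)) t) →
        ‖φε (τ / ε)‖ < δ :=
  statement10_general e lam (fun j => (hlam_pos j).le) hlam_top L hLsym hLper U hUiso hUsurj hU0
    hUgen B hBnonneg hBloc hcond2 hnoeig
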